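/- Let p be a prime and A = ZMod p × ZMod p². Define the braiding B((j,n),(l,m)) = exp(2πi·(j.val·m.val + n.val·l.val)/p) (the braiding of the ℤ_p × ℤ_{p²} anyon theory with θ((j,n)) = exp(2πi·j.val·n.val/p)). Then there do not exist elements b, c ∈ A such that b has additive order p, c has additive order p², B(b,c) = 1, and b and c together generate A (i.e. AddSubgroup.closure {b, c} = ⊤). In other words, the ℤ_p × ℤ_{p²} anyon theory cannot be decomposed into a ℤ_p subtheory and a ℤ_{p²} subtheory with trivially braiding generators. -/

import Mathlib

/-- The bilinear braiding of the `ℤ_p × ℤ_{p²}` anyon theory on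
`ZMod p × ZMod p²`: `B((j,n),(l,m)) = exp(2πi(jm + nl)/p)`. -/
noncomputable def braidZpZpsq (p : ℕ) (x y : ZMod p × ZMod (p ^ 2)) : ℂ :=
  Complex.exp (2 * Real.pi * Complex.I *
    ((x.1.val : ℂ) * (y.2.val : ℂ) + (x.2.val : ℂ) * (y.1.val : ℂ)) / (p : ℂ))

/-- The `ℤ_p × ℤ_{p²}` anyon theory does not decompose: there are no elements `b`
of order `p` and `c` of order `p²` that braid trivially with each other and
together generate the whole fusion group. -/
theorem zp_zpsq_indecomposable (p : ℕ) (hp : p.Prime) :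
    ¬ ∃ b c : ZMod p × ZMod (p ^ 2),
        addOrderOf b = p ∧ addOrderOf c = p ^ 2 ∧ braidZpZpsq p b c = 1 ∧
        AddSubgroup.closure ({b, c} : Set (ZMod p × ZMod (p ^ 2))) = ⊤ := by
  rintro ⟨⟨j, n⟩, ⟨l, m⟩, hb, hc, hB, hcl⟩
  have : Fact p.Prime := ⟨hp⟩
  have : NeZero p := ⟨hp.ne_zero⟩
  have : NeZero (p ^ 2) := ⟨pow_ne_zero 2 hp.ne_zero⟩
  have hp0 : (p : ℂ) ≠ 0 := by exact_mod_cast hp.ne_zero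
  -- `p` divides `n`
  have hn : p ∣ n.val := by
    have h1 : p • ((j, n) : ZMod p × ZMod (p ^ 2)) = 0 :=
      addOrderOf_dvd_iff_nsmul_eq_zero.1 hb.dvd
    have h2 : p • n = 0 := congrArg Prod.snd h1
    have h3 : ((p * n.val : ℕ) : ZMod (p ^ 2)) = 0 := by
      rw [Nat.cast_mul, ZMod.natCast_zmod_val, ← nsmul_eq_mul, h2]
    rw [ZMod.natCast_eq_zero_iff] at h3
    exact Nat.dvd_of_mul_dvd_mul_left hp.pos ((pow_two p).symm.dvd.trans h3)
  -- `p` does not divide `m`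
  have hm : ¬ p ∣ m.val := by
    rintro ⟨k, hk⟩
    have h2 : p • m = 0 := by
      rw [← ZMod.natCast_zmod_val m, hk, nsmul_eq_mul, ← Nat.cast_mul,
        ZMod.natCast_eq_zero_iff]
      exact ⟨k, by ring⟩
    have h1 : p • ((l, m) : ZMod p × ZMod (p ^ 2)) = 0 := by
      refine Prod.ext ?_ h2
      change p • l = 0
      rw [nsmul_eq_mul, CharP.cast_eq_zero, zero_mul]
    have h3 := addOrderOf_dvd_of_nsmul_eq_zero h1
    rw [hc] at h3
    have h4 := Nat.le_of_dvd hp.pos h3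
    nlinarith [hp.two_le]
  -- trivial braiding
  have hd : p ∣ j.val * m.val + n.val * l.val := by
    unfold braidZpZpsq at hB
    rw [Complex.exp_eq_one_iff] at hB
    obtain ⟨k, hk⟩ := hB
    have hpi : (2 * Real.pi * Complex.I : ℂ) ≠ 0 := Complex.two_pi_I_ne_zero
    rw [div_eq_iff hp0] at hk
    have h5 : ((j.val : ℂ) * (m.val : ℂ) + (n.val : ℂ) * (l.val : ℂ)) = k * p := by
      apply mul_left_cancel₀ hpi
      rw [hk]; ring
    have h6 : ((j.val * m.val + n.val * l.val : ℕ) : ℤ) = k * p := by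
      exact_mod_cast h5
    have h7 : (p : ℤ) ∣ ((j.val * m.val + n.val * l.val : ℕ) : ℤ) := ⟨k, by rw [h6]; ring⟩
    exact_mod_cast h7
  have hj : j = 0 := by
    have h1 : p ∣ j.val * m.val := (Nat.dvd_add_left (hn.mul_right _)).1 hd
    have h2 := (hp.dvd_mul.1 h1).resolve_right hm
    rw [← ZMod.natCast_zmod_val j, ZMod.natCast_eq_zero_iff]
    exact h2
  have hmem : ((1, 0) : ZMod p × ZMod (p ^ 2)) ∈
      AddSubgroup.closure ({(j, n), (l, m)} : Set (ZMod p × ZMod (p ^ 2))) := by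
    rw [hcl]; trivial
  rw [AddSubgroup.mem_closure_pair] at hmem
  obtain ⟨x, y, hxy⟩ := hmem
  have e1 : x • j + y • l = 1 := congrArg Prod.fst hxy
  have e2 : x • n + y • m = 0 := congrArg Prod.snd hxy
  have e3 : ((x * n.val + y * m.val : ℤ) : ZMod (p ^ 2)) = 0 := by
    push_cast
    rw [ZMod.natCast_zmod_val, ZMod.natCast_zmod_val, ← zsmul_eq_mul, ← zsmul_eq_mul, e2]
  rw [ZMod.intCast_zmod_eq_zero_iff_dvd] at e3
  have e4 : (p : ℤ) ∣ x * n.val + y * m.val :=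
    dvd_trans ⟨p, by push_cast; ring⟩ e3
  have e5 : (p : ℤ) ∣ y * m.val :=
    (dvd_add_right (Dvd.dvd.mul_left (by exact_mod_cast hn) x)).1 e4
  have e6 : (p : ℤ) ∣ y :=
    ((Nat.prime_iff_prime_int.1 hp).dvd_or_dvd e5).resolve_right
      (by exact_mod_cast hm)
  have e7 : (y : ZMod p) = 0 := (ZMod.intCast_zmod_eq_zero_iff_dvd y p).2 e6
  rw [hj, smul_zero, zero_add, zsmul_eq_mul, e7, zero_mul] at e1
  exact zero_ne_one e1
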